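/- Let (Q, Σ) be a DFA with n = |Q|. Suppose there exists a word u over Σ with |u| ≤ 3 and |Qu| ≤ n − 2, and suppose there exists a word w over Σ with |Qw| ≤ n − 3. Then there exists a word w over Σ with |w| ≤ 9 and |Qw| ≤ n − 3. -/

import Mathlib

/-- The image of a finite set of states `R` under a word (list of letters),
where each letter `s` acts on states via `act s`. -/
def wordImage {Q A : Type*} [DecidableEq Q] (act : A → Q → Q) (R : Finset Q) :
    List A → Finset Q
  | [] => R
  | s :: w => wordImage act (R.image (act s)) w

/-- The action of a word on a state. -/
def runWord {Q A : Type*} (act : A → Q → Q) (w : List A) (q : Q) : Q :=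
  w.foldl (fun x s => act s x) q

theorem runWord_append {Q A : Type*} (act : A → Q → Q) (w v : List A) (q : Q) :
    runWord act (w ++ v) q = runWord act v (runWord act w q) := by
  simp [runWord]

theorem wordImage_eq {Q A : Type*} [DecidableEq Q] (act : A → Q → Q) (w : List A) :
    ∀ R : Finset Q, wordImage act R w = R.image (runWord act w) := by
  induction w with
  | nil => intro R; ext x; simp [wordImage, runWord]
  | cons s w ih =>
    intro R
    rw [wordImage, ih, Finset.image_image]
    rfl

theorem wordImage_append {Q A : Type*} [DecidableEq Q] (act : A → Q → Q) (w v : List A)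
    (R : Finset Q) : wordImage act R (w ++ v) = wordImage act (wordImage act R w) v := by
  simp only [wordImage_eq, Finset.image_image]
  congr 1
  funext q
  exact runWord_append act w v q

/-- Skew Bollobás for pairs against pairs: no sequence of length seven. -/
theorem skew_pairs (p q s t : Fin 7 → ℝ)
    (hd : ∀ i, (p i - s i) * (p i - t i) * ((q i - s i) * (q i - t i)) ≠ 0)
    (hz : ∀ i j, i < j → (p j - s i) * (p j - t i) * ((q j - s i) * (q j - t i)) = 0) :
    False := by
  let M : Matrix (Fin 7) (Fin 7) ℝ :=
    Matrix.of fun i j => (p j - s i) * (p j - t i) * ((q j - s i) * (q j - t i))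
  let F : Matrix (Fin 7) (Fin 6) ℝ := Matrix.of fun i =>
    ![1, -(s i + t i), s i * t i, (s i + t i) ^ 2, -(s i + t i) * (s i * t i), (s i * t i) ^ 2]
  let G : Matrix (Fin 6) (Fin 7) ℝ := Matrix.of fun k j =>
    ![p j ^ 2 * q j ^ 2, p j ^ 2 * q j + p j * q j ^ 2, p j ^ 2 + q j ^ 2, p j * q j,
      p j + q j, 1] k
  have hM : M = F * G := by
    ext i j
    simp [M, F, G, Matrix.mul_apply, Fin.sum_univ_succ]
    ring
  have hdet : M.det ≠ 0 := by
    rw [Matrix.det_of_lowerTriangular M (fun i j hij => hz i j (by simpa using hij))]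
    exact Finset.prod_ne_zero_iff.mpr fun i _ => hd i
  have h1 : M.rank = 7 := by
    have := Matrix.rank_of_isUnit M ((Matrix.isUnit_iff_isUnit_det M).mpr hdet.isUnit)
    simpa using this
  have h2 : M.rank ≤ 6 := by
    rw [hM]
    refine (Matrix.rank_mul_le_left F G).trans ?_
    simpa using Matrix.rank_le_card_width F
  omega

theorem exists_short {Q A : Type*} [Fintype Q] [DecidableEq Q] (act : A → Q → Q)
    (R : Finset Q) (hR : Rᶜ.card = 2)
    (h : ∃ v : List A, (wordImage act R v).card < R.card) :
    ∃ v : List A, v.length ≤ 6 ∧ (wordImage act R v).card < R.card := by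
  classical
  have hex : ∃ m, ∃ v : List A, v.length = m ∧ (wordImage act R v).card < R.card := by
    obtain ⟨v, hv⟩ := h
    exact ⟨_, v, rfl, hv⟩
  obtain ⟨v, hvl, hv⟩ := Nat.find_spec hex
  have hmin : ∀ w : List A, w.length < v.length → R.card ≤ (wordImage act R w).card := by
    intro w hw
    by_contra hc
    exact Nat.find_min hex (hvl ▸ hw) ⟨w, rfl, not_le.mp hc⟩
  by_cases hl : v.length ≤ 6
  · exact ⟨v, hl, hv⟩
  exfalso
  have hcard : ∀ w : List A, w.length < v.length → (wordImage act R w).card = R.card := by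
    intro w hw
    refine le_antisymm ?_ (hmin w hw)
    rw [wordImage_eq]
    exact Finset.card_image_le
  obtain ⟨p, hp, q, hq, hpq, hpqv⟩ : ∃ p ∈ R, ∃ q ∈ R, p ≠ q ∧
      runWord act v p = runWord act v q := by
    rw [wordImage_eq] at hv
    by_contra hc
    push Not at hc
    refine hv.ne (Finset.card_image_of_injOn fun x hx y hy hxy => ?_)
    by_contra hne
    exact hc x hx y hy hne hxy
  have hT : ∀ i : Fin 7, ∃ s t : Q, (wordImage act R (v.take i))ᶜ = {s, t} := by
    intro i
    have : ((wordImage act R (v.take i))ᶜ).card = 2 := by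
      rw [Finset.card_compl, hcard _ (by simp; omega), ← Finset.card_compl, hR]
    obtain ⟨s, t, -, h⟩ := Finset.card_eq_two.mp this
    exact ⟨s, t, h⟩
  choose s t hst using hT
  have hmem : ∀ (i : Fin 7) (x : Q),
      x ∈ wordImage act R (v.take i) ↔ ¬ (x = s i ∨ x = t i) := by
    intro i x
    have : x ∈ (wordImage act R (v.take i))ᶜ ↔ (x = s i ∨ x = t i) := by
      rw [hst]; simp
    rw [← this]; simp
  let e : Q → ℝ := fun x => ((Fintype.equivFin Q x : ℕ) : ℝ)
  have he : ∀ x y, e x - e y = 0 ↔ x = y := by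
    intro x y
    simp [e, sub_eq_zero, Fin.val_inj]
  let P : Fin 7 → Q := fun j => runWord act (v.take j) p
  let P' : Fin 7 → Q := fun j => runWord act (v.take j) q
  have hP : ∀ i : Fin 7, P i ∈ wordImage act R (v.take i) := fun i => by
    rw [wordImage_eq]; exact Finset.mem_image_of_mem _ hp
  have hP' : ∀ i : Fin 7, P' i ∈ wordImage act R (v.take i) := fun i => by
    rw [wordImage_eq]; exact Finset.mem_image_of_mem _ hq
  refine skew_pairs (fun i => e (P i)) (fun i => e (P' i)) (fun i => e (s i))
    (fun i => e (t i)) ?_ ?_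
  · intro i
    have h1 := (hmem i _).mp (hP i)
    have h2 := (hmem i _).mp (hP' i)
    simp only [ne_eq, mul_eq_zero, he]
    tauto
  · intro i j hij
    simp only [mul_eq_zero, he]
    by_contra hc
    have h1 : P j ∈ wordImage act R (v.take i) := (hmem i _).mpr (by tauto)
    have h2 : P' j ∈ wordImage act R (v.take i) := (hmem i _).mpr (by tauto)
    have hij' : (i : ℕ) < j := hij
    have hne : P j ≠ P' j := by
      intro heq
      have hc := hcard (v.take j) (by simp; omega)
      rw [wordImage_eq] at hc
      exact hpq (Finset.card_image_iff.mp hc hp hq heq)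
    have hc2 := hcard (v.take i ++ v.drop j) (by simp; omega)
    rw [wordImage_append, ← hcard (v.take i) (by simp; omega),
      wordImage_eq act (v.drop j)] at hc2
    refine hne (Finset.card_image_iff.mp hc2 h1 h2 ?_)
    simp only [P, P']
    rw [← runWord_append, ← runWord_append, List.take_append_drop, hpqv]

theorem stmt_8 {Q A : Type*} [Fintype Q] [DecidableEq Q] (act : A → Q → Q)
    (h2 : ∃ u : List A, u.length ≤ 3 ∧
      (wordImage act Finset.univ u).card ≤ Fintype.card Q - 2)
    (h3 : ∃ w : List A, (wordImage act Finset.univ w).card ≤ Fintype.card Q - 3) :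
    ∃ w : List A, w.length ≤ 9 ∧
      (wordImage act Finset.univ w).card ≤ Fintype.card Q - 3 := by
  obtain ⟨u, hu, hu2⟩ := h2
  obtain ⟨w, hw⟩ := h3
  by_cases hle : (wordImage act Finset.univ u).card ≤ Fintype.card Q - 3
  · exact ⟨u, by omega, hle⟩
  have hsub : (wordImage act (wordImage act Finset.univ u) w).card ≤
      (wordImage act Finset.univ w).card := by
    rw [wordImage_eq act w, wordImage_eq act w]
    exact Finset.card_le_card (Finset.image_subset_image (Finset.subset_univ _))
  obtain ⟨v, hv, hv2⟩ := exists_short act (wordImage act Finset.univ u)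
    (by rw [Finset.card_compl]; omega) ⟨w, by omega⟩
  refine ⟨u ++ v, by simp; omega, ?_⟩
  rw [wordImage_append]
  omega
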